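/- There exist constants H > 0, D > 0, α₀ > 0 and β₀ > 0, depending only on the instance μ (and the family b) and not on the allocation, such that for every allocation N = (N_1,…,N_K) ∈ ℝ_{>0}^K with g(μ, N) = 0: (1) h_a ≤ H and d_{a,a}^{-1} ≤ D for every a ∈ {2,…,K}; (2) there exists ã ∈ argmax_{a≠1} d(μ_1, x_{1,a})/d(μ_a, x_{1,a}) such that N_ã > α₀·N (where N = Σ_{a∈[K]} N_a) and h_ã ≥ β₀. -/

import Mathlib

open scoped BigOperators

/-- A single-parameter exponential family, given by the log-partition function `b`,
smooth with positive second derivative on an open interval `Θ`, together with the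
inverse `θof` of `b'` on the set of means `S = b'(Θ)`. -/
structure SPEF where
  Θ : Set ℝ
  Θ_isOpen : IsOpen Θ
  Θ_ordConnected : Set.OrdConnected Θ
  Θ_nonempty : Θ.Nonempty
  b : ℝ → ℝ
  b_smooth : ContDiffOn ℝ (⊤ : ℕ∞) b Θ
  b_conv : ∀ t ∈ Θ, 0 < iteratedDeriv 2 b t
  θof : ℝ → ℝ
  θof_mem : ∀ μ ∈ deriv b '' Θ, θof μ ∈ Θ
  θof_spec : ∀ μ ∈ deriv b '' Θ, deriv b (θof μ) = μ

namespace SPEF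

/-- The set of means of the family. -/
def S (F : SPEF) : Set ℝ := deriv F.b '' F.Θ

/-- KL divergence `d(μ, x)` between the members of the family with means `μ` and `x`. -/
noncomputable def d (F : SPEF) (μ x : ℝ) : ℝ :=
  (F.θof μ - F.θof x) * μ - F.b (F.θof μ) + F.b (F.θof x)

end SPEF

/-- A `K`-armed bandit instance with arm distributions in a fixed SPEF; arm `0`
(the paper's arm `1`) is the unique best arm. -/
structure Bandit (K : ℕ) [NeZero K] extends SPEF where
  two_le : 2 ≤ K
  μ : Fin K → ℝ
  μ_mem : ∀ a, μ a ∈ SPEF.S toSPEF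
  μ_best : ∀ a : Fin K, a ≠ 0 → μ a < μ 0

namespace Bandit

variable {K : ℕ} [NeZero K]

/-- KL divergence of the underlying family. -/
noncomputable def d (M : Bandit K) : ℝ → ℝ → ℝ := M.toSPEF.d

/-- The weighted mean `x_{1,a}(N₁, N_a)`. -/
noncomputable def x1 (M : Bandit K) (a : Fin K) (N1 Na : ℝ) : ℝ :=
  (N1 * M.μ 0 + Na * M.μ a) / (N1 + Na)

/-- The index `W_a(N₁, N_a)` of an arm `a ≠ 1`. -/
noncomputable def W (M : Bandit K) (a : Fin K) (N1 Na : ℝ) : ℝ :=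
  N1 * M.d (M.μ 0) (M.x1 a N1 Na) + Na * M.d (M.μ a) (M.x1 a N1 Na)

/-- The set `{2, …, K}` of suboptimal arms. -/
def alt (K : ℕ) [NeZero K] : Finset (Fin K) := Finset.univ.filter (fun a => a ≠ 0)

/-- The anchor function `g(μ, N)`. -/
noncomputable def g (M : Bandit K) (Nv : Fin K → ℝ) : ℝ :=
  (∑ a ∈ alt K, M.d (M.μ 0) (M.x1 a (Nv 0) (Nv a)) / M.d (M.μ a) (M.x1 a (Nv 0) (Nv a))) - 1

end Bandit

open Bandit

namespace Bandit

variable {K : ℕ} [NeZero K]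

/-- Partial derivative of the KL divergence `d` in its second argument. -/
noncomputable def d2 (M : Bandit K) (μv x : ℝ) : ℝ := deriv (fun y => M.d μv y) x

/-- The quantity `f(μ, a, N)`, the negative of the derivative of `g` w.r.t. `x_{1,a}`. -/
noncomputable def fq (M : Bandit K) (a : Fin K) (Nv : Fin K → ℝ) : ℝ :=
  (M.d (M.μ 0) (M.x1 a (Nv 0) (Nv a)) / M.d (M.μ a) (M.x1 a (Nv 0) (Nv a))) *
    (M.d2 (M.μ a) (M.x1 a (Nv 0) (Nv a)) / M.d (M.μ a) (M.x1 a (Nv 0) (Nv a)) -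
      M.d2 (M.μ 0) (M.x1 a (Nv 0) (Nv a)) / M.d (M.μ 0) (M.x1 a (Nv 0) (Nv a)))

/-- The quantity `h_a(μ, N₁, N_a) = f(μ, a, N)·N₁²·Δ_a/(N₁+N_a)²`. -/
noncomputable def hq (M : Bandit K) (a : Fin K) (Nv : Fin K → ℝ) : ℝ :=
  M.fq a Nv * ((Nv 0) ^ 2 * (M.μ 0 - M.μ a) / (Nv 0 + Nv a) ^ 2)

/-- The quantity `h(B) = Σ_{a∈B} h_a·d_{a,a}⁻¹`. -/
noncomputable def hB (M : Bandit K) (B : Finset (Fin K)) (Nv : Fin K → ℝ) : ℝ :=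
  ∑ a ∈ B, M.hq a Nv / M.d (M.μ a) (M.x1 a (Nv 0) (Nv a))

/-- The quantity `h(N) = Σ_{a∈B̄ᶜ} h_a·N_a`. -/
noncomputable def hN (M : Bandit K) (B : Finset (Fin K)) (Nv : Fin K → ℝ) : ℝ :=
  ∑ a ∈ alt K \ B, M.hq a Nv * Nv a

/-- The quantity `d_B = (Σ_{a∈B} d_{a,a}⁻¹)⁻¹`. -/
noncomputable def dB (M : Bandit K) (B : Finset (Fin K)) (Nv : Fin K → ℝ) : ℝ :=
  (∑ a ∈ B, (M.d (M.μ a) (M.x1 a (Nv 0) (Nv a)))⁻¹)⁻¹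

end Bandit

/- Write `V` for the variance of the family as a function of the mean. Since
`∂d/∂x (μ, x) = (x - μ) / V(x)`, a mean value argument gives `d(μ, x) = (x - μ)² / (2 V(ξ))` with
`ξ` between `μ` and `x`, and `v ≤ V ≤ w` holds on the compact interval spanned by the means. The
weighted mean satisfies `N₁ (μ₁ - x) = N_a (x - μ_a)`, so the ratio
`r_a = d(μ₁, x) / d(μ_a, x)` equals `(N_a / N₁)²` up to a factor `w / v`, and cancelling `d(μ₁, x)`
in `h_a` leaves `h_a = (r_a N₁ + N_a) / (N₁ + N_a) · (x - μ_a)² / (V(x) d(μ_a, x))`, whose last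
factor lies between `2v / w` and `2w / v`. If `g = 0`, the ratios sum to `1`: each is at most `1`,
so every `N_a` is at most a multiple of `N₁`, and the largest is at least `1 / K`, so `N₁` is at
most a multiple of that arm's `N_a`. -/

open Set in
lemma exists_sub_eq_mul_sq_of_hasDerivAt {f c : ℝ → ℝ} {a x : ℝ}
    (hf : ∀ y ∈ uIcc a x, HasDerivAt f (c y * (y - a)) y) :
    ∃ ξ ∈ uIcc a x, f x - f a = c ξ / 2 * (x - a) ^ 2 := by
  let p : ℝ →ᵃ[ℝ] ℝ := AffineMap.lineMap a x
  have hp {s : ℝ} (hs : s ∈ Icc (0 : ℝ) 1) : p s ∈ uIcc a x := by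
    rw [← segment_eq_uIcc, segment_eq_image_lineMap ℝ]
    exact mem_image_of_mem _ hs
  have hpa (s : ℝ) : p s - a = s * (x - a) := by simp [p, AffineMap.lineMap_apply]
  have hfp {s : ℝ} (hs : s ∈ Icc (0 : ℝ) 1) :
      HasDerivAt (f ∘ p) (c (p s) * (s * (x - a)) * (x - a)) s :=
    hpa s ▸ (hf (p s) (hp hs)).comp s AffineMap.hasDerivAt_lineMap
  have hsq (s : ℝ) : HasDerivAt (fun t : ℝ => t ^ 2) (2 * s) s := by
    simpa using hasDerivAt_pow 2 s
  obtain ⟨s, hs, h⟩ := exists_ratio_hasDerivAt_eq_ratio_slope _ _ zero_lt_one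
    (fun t ht => (hfp ht).continuousAt.continuousWithinAt)
    (fun t ht => hfp (Ioo_subset_Icc_self ht)) _ _
    (fun t _ => (hsq t).continuousAt.continuousWithinAt) (fun t _ => hsq t)
  refine ⟨p s, hp (Ioo_subset_Icc_self hs), mul_right_cancel₀ hs.1.ne' ?_⟩
  simp only [Function.comp_apply, p, AffineMap.lineMap_apply_one,
    AffineMap.lineMap_apply_zero] at h ⊢
  linarith

lemma le_mul_of_sq_le_mul_sq {c x y : ℝ} (hc : 1 ≤ c) (hy : 0 ≤ y) (h : x ^ 2 ≤ c * y ^ 2) :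
    x ≤ c * y := by
  refine le_of_sq_le_sq ?_ (by positivity)
  calc x ^ 2 ≤ c * y ^ 2 := h
    _ ≤ c ^ 2 * y ^ 2 := by gcongr; exact le_self_pow₀ hc two_ne_zero
    _ = (c * y) ^ 2 := (mul_pow c y 2).symm

namespace SPEF

open Set

variable (F : SPEF)

lemma contDiffOn_deriv_b : ContDiffOn ℝ 1 (deriv F.b) F.Θ :=
  F.b_smooth.deriv_of_isOpen F.Θ_isOpen (by norm_cast)

lemma deriv_deriv_b_pos {t : ℝ} (ht : t ∈ F.Θ) : 0 < deriv (deriv F.b) t := by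
  simpa [iteratedDeriv_succ] using F.b_conv t ht

lemma hasDerivAt_b {t : ℝ} (ht : t ∈ F.Θ) : HasDerivAt F.b (deriv F.b t) t :=
  ((F.b_smooth.contDiffAt (F.Θ_isOpen.mem_nhds ht)).differentiableAt (by simp)).hasDerivAt

lemma hasStrictDerivAt_deriv_b {t : ℝ} (ht : t ∈ F.Θ) :
    HasStrictDerivAt (deriv F.b) (deriv (deriv F.b) t) t :=
  (F.contDiffOn_deriv_b.contDiffAt (F.Θ_isOpen.mem_nhds ht)).hasStrictDerivAt one_ne_zero

lemma strictMonoOn_deriv_b : StrictMonoOn (deriv F.b) F.Θ :=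
  strictMonoOn_of_deriv_pos F.Θ_ordConnected.convex F.contDiffOn_deriv_b.continuousOn
    fun _ ht => F.deriv_deriv_b_pos (interior_subset ht)

lemma θof_deriv_b {t : ℝ} (ht : t ∈ F.Θ) : F.θof (deriv F.b t) = t :=
  F.strictMonoOn_deriv_b.injOn (F.θof_mem _ ⟨t, ht, rfl⟩) ht (F.θof_spec _ ⟨t, ht, rfl⟩)

lemma ordConnected_S : F.S.OrdConnected :=
  (F.Θ_ordConnected.isPreconnected.image _ F.contDiffOn_deriv_b.continuousOn).ordConnected

/-- The variance function of the family: the variance `b''(θ_x)` of its member with mean `x`. -/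
noncomputable def variance (x : ℝ) : ℝ := deriv (deriv F.b) (F.θof x)

variable {F} {s : Set ℝ} {μ x v w : ℝ}

lemma variance_pos (hx : x ∈ F.S) : 0 < F.variance x := F.deriv_deriv_b_pos (F.θof_mem x hx)

lemma hasDerivAt_θof (hx : x ∈ F.S) : HasDerivAt F.θof (F.variance x)⁻¹ x := by
  obtain ⟨t, ht, rfl⟩ := hx
  rw [variance, F.θof_deriv_b ht]
  refine ((F.hasStrictDerivAt_deriv_b ht).to_local_left_inverse
    (F.deriv_deriv_b_pos ht).ne' ?_).hasDerivAt
  filter_upwards [F.Θ_isOpen.mem_nhds ht] with u hu using F.θof_deriv_b hu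

lemma continuousOn_variance : ContinuousOn F.variance F.S :=
  (F.contDiffOn_deriv_b.continuousOn_deriv_of_isOpen F.Θ_isOpen le_rfl).comp
    (fun _ hx => (hasDerivAt_θof hx).continuousAt.continuousWithinAt) F.θof_mem

lemma exists_mapsTo_variance_Icc (hs : IsCompact s) (hne : s.Nonempty) (hsS : s ⊆ F.S) :
    ∃ v w : ℝ, 0 < v ∧ v ≤ w ∧ MapsTo F.variance s (Icc v w) := by
  have hc := continuousOn_variance.mono hsS
  obtain ⟨y, hy, hmin⟩ := hs.exists_isMinOn hne hc
  obtain ⟨z, hz, hmax⟩ := hs.exists_isMaxOn hne hc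
  exact ⟨_, _, variance_pos (hsS hy), hmin hz, fun x hx => ⟨hmin hx, hmax hx⟩⟩

lemma d_self (F : SPEF) (μ : ℝ) : F.d μ μ = 0 := by simp [d]

lemma hasDerivAt_d (μ : ℝ) (hx : x ∈ F.S) :
    HasDerivAt (F.d μ) ((F.variance x)⁻¹ * (x - μ)) x := by
  have hθ := hasDerivAt_θof hx
  have hb := (F.hasDerivAt_b (F.θof_mem x hx)).comp x hθ
  rw [F.θof_spec x hx] at hb
  exact ((((hθ.const_sub (F.θof μ)).mul_const μ).sub_const (F.b (F.θof μ))).add hb).congr_deriv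
    (by ring)

lemma exists_two_mul_variance_mul_d_eq_sq (hμ : μ ∈ F.S) (hx : x ∈ F.S) :
    ∃ ξ ∈ uIcc μ x, 2 * F.variance ξ * F.d μ x = (x - μ) ^ 2 := by
  have hS : uIcc μ x ⊆ F.S := F.ordConnected_S.uIcc_subset hμ hx
  obtain ⟨ξ, hξ, h⟩ := exists_sub_eq_mul_sq_of_hasDerivAt fun y hy => hasDerivAt_d μ (hS hy)
  have hV := variance_pos (hS hξ)
  refine ⟨ξ, hξ, ?_⟩
  rw [d_self, sub_zero] at h
  rw [h]
  field_simp

lemma d_nonneg (hμ : μ ∈ F.S) (hx : x ∈ F.S) : 0 ≤ F.d μ x := by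
  obtain ⟨ξ, hξ, h⟩ := exists_two_mul_variance_mul_d_eq_sq hμ hx
  have hV := variance_pos (F.ordConnected_S.uIcc_subset hμ hx hξ)
  exact nonneg_of_mul_nonneg_right (h ▸ sq_nonneg _) (by positivity)

lemma sq_sub_le_two_mul_mul_d (hμ : μ ∈ F.S) (hx : x ∈ F.S)
    (hw : ∀ y ∈ uIcc μ x, F.variance y ≤ w) : (x - μ) ^ 2 ≤ 2 * w * F.d μ x := by
  obtain ⟨ξ, hξ, h⟩ := exists_two_mul_variance_mul_d_eq_sq hμ hx
  rw [← h]
  gcongr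
  exacts [d_nonneg hμ hx, hw ξ hξ]

lemma two_mul_mul_d_le_sq_sub (hμ : μ ∈ F.S) (hx : x ∈ F.S)
    (hv : ∀ y ∈ uIcc μ x, v ≤ F.variance y) : 2 * v * F.d μ x ≤ (x - μ) ^ 2 := by
  obtain ⟨ξ, hξ, h⟩ := exists_two_mul_variance_mul_d_eq_sq hμ hx
  rw [← h]
  gcongr
  exacts [d_nonneg hμ hx, hv ξ hξ]

lemma d_pos (hμ : μ ∈ F.S) (hx : x ∈ F.S) (hne : x ≠ μ) : 0 < F.d μ x := by
  refine (d_nonneg hμ hx).lt_of_ne' fun h0 => ?_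
  obtain ⟨ξ, -, h⟩ := exists_two_mul_variance_mul_d_eq_sq hμ hx
  rw [h0, mul_zero] at h
  exact pow_ne_zero 2 (sub_ne_zero.2 hne) h.symm

lemma mul_sq_mul_d_le_of_balance {ν m n : ℝ} (hs : s.OrdConnected) (hsS : s ⊆ F.S)
    (hV : MapsTo F.variance s (Icc v w)) (hv : 0 < v) (hμ : μ ∈ s) (hν : ν ∈ s) (hx : x ∈ s)
    (hne : x ≠ ν) (hbal : m * (μ - x) = n * (x - ν)) :
    v * (m ^ 2 * F.d μ x) ≤ w * (n ^ 2 * F.d ν x) := by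
  have hνx := sq_sub_le_two_mul_mul_d (hsS hν) (hsS hx)
    fun y hy => (hV (hs.uIcc_subset hν hx hy)).2
  have hμx := two_mul_mul_d_le_sq_sub (hsS hμ) (hsS hx)
    fun y hy => (hV (hs.uIcc_subset hμ hx hy)).1
  have hdμ := d_nonneg (hsS hμ) (hsS hx)
  have hdν := d_nonneg (hsS hν) (hsS hx)
  have hw : 0 ≤ w := hv.le.trans ((hV hx).1.trans (hV hx).2)
  refine le_of_mul_le_mul_right ?_ (sq_pos_iff.2 (sub_ne_zero.2 hne))
  calc v * (m ^ 2 * F.d μ x) * (x - ν) ^ 2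
      ≤ v * (m ^ 2 * F.d μ x) * (2 * w * F.d ν x) := by gcongr
    _ = w * m ^ 2 * (2 * v * F.d μ x) * F.d ν x := by ring
    _ ≤ w * m ^ 2 * (x - μ) ^ 2 * F.d ν x := by gcongr
    _ = w * (m * (μ - x)) ^ 2 * F.d ν x := by ring
    _ = w * (n ^ 2 * F.d ν x) * (x - ν) ^ 2 := by rw [hbal]; ring

lemma sq_sub_div_variance_mul_d_mem_Icc (hs : s.OrdConnected) (hsS : s ⊆ F.S)
    (hV : MapsTo F.variance s (Icc v w)) (hv : 0 < v) (hμ : μ ∈ s) (hx : x ∈ s) (hne : x ≠ μ) :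
    (x - μ) ^ 2 / (F.variance x * F.d μ x) ∈ Icc (2 * (v / w)) (2 * (w / v)) := by
  have hd := d_pos (hsS hμ) (hsS hx) hne
  have hVx := variance_pos (hsS hx)
  obtain ⟨hvx, hxw⟩ := hV hx
  have hw : 0 < w := hVx.trans_le hxw
  constructor
  · rw [le_div_iff₀ (by positivity)]
    calc 2 * (v / w) * (F.variance x * F.d μ x) ≤ 2 * (v / w) * (w * F.d μ x) := by gcongr
      _ = 2 * v * F.d μ x := by field_simp
      _ ≤ (x - μ) ^ 2 := two_mul_mul_d_le_sq_sub (hsS hμ) (hsS hx)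
          fun y hy => (hV (hs.uIcc_subset hμ hx hy)).1
  · rw [div_le_iff₀ (by positivity)]
    calc (x - μ) ^ 2 ≤ 2 * w * F.d μ x := sq_sub_le_two_mul_mul_d (hsS hμ) (hsS hx)
          fun y hy => (hV (hs.uIcc_subset hμ hx hy)).2
      _ = 2 * (w / v) * (v * F.d μ x) := by field_simp
      _ ≤ 2 * (w / v) * (F.variance x * F.d μ x) := by gcongr

end SPEF

namespace Bandit

open Set SPEF

variable {K : ℕ} [NeZero K] {M : Bandit K} {a : Fin K}

lemma mem_alt : a ∈ alt K ↔ a ≠ 0 := by simp [alt]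

lemma alt_nonempty (M : Bandit K) : (alt K).Nonempty :=
  ⟨⟨1, M.two_le⟩, mem_alt.2 fun h => by simpa using congrArg Fin.val h⟩

lemma Icc_μ_subset_S (M : Bandit K) (a : Fin K) : Icc (M.μ a) (M.μ 0) ⊆ M.S :=
  M.ordConnected_S.out (M.μ_mem a) (M.μ_mem 0)

lemma exists_forall_mapsTo_variance_Icc (M : Bandit K) :
    ∃ v w : ℝ, 0 < v ∧ v ≤ w ∧ ∀ a, MapsTo M.variance (Icc (M.μ a) (M.μ 0)) (Icc v w) := by
  have hne : (⋃ a, Icc (M.μ a) (M.μ 0)).Nonempty := ⟨M.μ 0, mem_iUnion_of_mem 0 ⟨le_rfl, le_rfl⟩⟩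
  simpa only [mapsTo_iUnion] using exists_mapsTo_variance_Icc
    (isCompact_iUnion fun a => isCompact_Icc) hne (iUnion_subset M.Icc_μ_subset_S)

lemma exists_gap_pos (M : Bandit K) : ∃ δ > 0, ∀ a ≠ 0, δ ≤ M.μ 0 - M.μ a := by
  obtain ⟨j, hj, hmax⟩ := Finset.exists_max_image (alt K) M.μ M.alt_nonempty
  exact ⟨M.μ 0 - M.μ j, sub_pos.2 (M.μ_best j (mem_alt.1 hj)),
    fun a ha => sub_le_sub_left (hmax a (mem_alt.2 ha)) _⟩

lemma d2_eq {μ x : ℝ} (hx : x ∈ M.S) : M.d2 μ x = (M.variance x)⁻¹ * (x - μ) :=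
  (hasDerivAt_d μ hx).deriv

/-- The ratio `d(μ₁, x_{1,a}) / d(μ_a, x_{1,a})`, the contribution of arm `a` to the anchor
function. -/
noncomputable def ratio (M : Bandit K) (a : Fin K) (N₁ Na : ℝ) : ℝ :=
  M.d (M.μ 0) (M.x1 a N₁ Na) / M.d (M.μ a) (M.x1 a N₁ Na)

lemma sum_ratio_eq_one_of_g_eq_zero {N : Fin K → ℝ} (hg : M.g N = 0) :
    ∑ a ∈ alt K, M.ratio a (N 0) (N a) = 1 :=
  sub_eq_zero.1 hg

section Arm

variable {N₁ Na v w : ℝ}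

lemma μ_zero_sub_x1 (h : N₁ + Na ≠ 0) :
    M.μ 0 - M.x1 a N₁ Na = Na * ((M.μ 0 - M.μ a) / (N₁ + Na)) := by
  unfold x1
  field_simp
  ring

lemma x1_sub_μ (h : N₁ + Na ≠ 0) :
    M.x1 a N₁ Na - M.μ a = N₁ * ((M.μ 0 - M.μ a) / (N₁ + Na)) := by
  unfold x1
  field_simp
  ring

lemma x1_balance (h : N₁ + Na ≠ 0) :
    N₁ * (M.μ 0 - M.x1 a N₁ Na) = Na * (M.x1 a N₁ Na - M.μ a) := by
  rw [μ_zero_sub_x1 h, x1_sub_μ h, mul_left_comm]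

lemma x1_mem_Ioo (ha : a ≠ 0) (h₁ : 0 < N₁) (hNa : 0 < Na) :
    M.x1 a N₁ Na ∈ Ioo (M.μ a) (M.μ 0) := by
  have hΔ : 0 < M.μ 0 - M.μ a := sub_pos.2 (M.μ_best a ha)
  have hN : 0 < N₁ + Na := by positivity
  constructor
  · rw [← sub_pos, x1_sub_μ hN.ne']
    positivity
  · rw [← sub_pos, μ_zero_sub_x1 hN.ne']
    positivity

lemma x1_mem_S (ha : a ≠ 0) (h₁ : 0 < N₁) (hNa : 0 < Na) : M.x1 a N₁ Na ∈ M.S :=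
  M.Icc_μ_subset_S a (Ioo_subset_Icc_self (x1_mem_Ioo ha h₁ hNa))

lemma d_μ_zero_x1_pos (ha : a ≠ 0) (h₁ : 0 < N₁) (hNa : 0 < Na) :
    0 < M.d (M.μ 0) (M.x1 a N₁ Na) :=
  d_pos (M.μ_mem 0) (x1_mem_S ha h₁ hNa) (x1_mem_Ioo ha h₁ hNa).2.ne

lemma d_μ_x1_pos (ha : a ≠ 0) (h₁ : 0 < N₁) (hNa : 0 < Na) :
    0 < M.d (M.μ a) (M.x1 a N₁ Na) :=
  d_pos (M.μ_mem a) (x1_mem_S ha h₁ hNa) (x1_mem_Ioo ha h₁ hNa).1.ne'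

lemma ratio_pos (ha : a ≠ 0) (h₁ : 0 < N₁) (hNa : 0 < Na) : 0 < M.ratio a N₁ Na :=
  div_pos (d_μ_zero_x1_pos ha h₁ hNa) (d_μ_x1_pos ha h₁ hNa)

lemma sq_mul_ratio_le (hV : MapsTo M.variance (Icc (M.μ a) (M.μ 0)) (Icc v w)) (hv : 0 < v)
    (ha : a ≠ 0) (h₁ : 0 < N₁) (hNa : 0 < Na) : N₁ ^ 2 * M.ratio a N₁ Na ≤ w / v * Na ^ 2 := by
  have hx := x1_mem_Ioo (M := M) ha h₁ hNa
  have hda := d_μ_x1_pos (M := M) ha h₁ hNa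
  have h := mul_sq_mul_d_le_of_balance ordConnected_Icc (M.Icc_μ_subset_S a) hV hv
    (right_mem_Icc.2 (M.μ_best a ha).le) (left_mem_Icc.2 (M.μ_best a ha).le)
    (Ioo_subset_Icc_self hx) hx.1.ne' (x1_balance (add_pos h₁ hNa).ne')
  rw [ratio, ← mul_div_assoc, div_le_iff₀ hda, div_mul_eq_mul_div, div_mul_eq_mul_div,
    le_div_iff₀ hv, mul_comm _ v, mul_assoc w]
  exact h

lemma sq_le_mul_ratio (hV : MapsTo M.variance (Icc (M.μ a) (M.μ 0)) (Icc v w)) (hv : 0 < v)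
    (ha : a ≠ 0) (h₁ : 0 < N₁) (hNa : 0 < Na) : Na ^ 2 ≤ w / v * (N₁ ^ 2 * M.ratio a N₁ Na) := by
  have hx := x1_mem_Ioo (M := M) ha h₁ hNa
  have hda := d_μ_x1_pos (M := M) ha h₁ hNa
  have h := mul_sq_mul_d_le_of_balance ordConnected_Icc (M.Icc_μ_subset_S a) hV hv
    (left_mem_Icc.2 (M.μ_best a ha).le) (right_mem_Icc.2 (M.μ_best a ha).le)
    (Ioo_subset_Icc_self hx) hx.2.ne
    (m := Na) (n := N₁) (by linarith [x1_balance (M := M) (a := a) (add_pos h₁ hNa).ne'])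
  rw [ratio, ← mul_div_assoc, div_mul_div_comm, le_div_iff₀ (by positivity), mul_left_comm]
  exact h

lemma le_mul_of_ratio_le_one (hV : MapsTo M.variance (Icc (M.μ a) (M.μ 0)) (Icc v w)) (hv : 0 < v)
    (hvw : v ≤ w) (ha : a ≠ 0) (h₁ : 0 < N₁) (hNa : 0 < Na) (hr : M.ratio a N₁ Na ≤ 1) :
    Na ≤ w / v * N₁ := by
  have hw : 0 < w := hv.trans_le hvw
  refine le_mul_of_sq_le_mul_sq ((one_le_div hv).2 hvw) h₁.le
    ((sq_le_mul_ratio hV hv ha h₁ hNa).trans ?_)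
  gcongr
  exact mul_le_of_le_one_right (sq_nonneg N₁) hr

lemma le_mul_of_one_le_mul_ratio (hV : MapsTo M.variance (Icc (M.μ a) (M.μ 0)) (Icc v w))
    (hv : 0 < v) (hvw : v ≤ w) (ha : a ≠ 0) (h₁ : 0 < N₁) (hNa : 0 < Na) {k : ℝ} (hk : 1 ≤ k)
    (hr : 1 ≤ k * M.ratio a N₁ Na) : N₁ ≤ k * (w / v) * Na := by
  refine le_mul_of_sq_le_mul_sq (one_le_mul_of_one_le_of_one_le hk ((one_le_div hv).2 hvw))
    hNa.le ?_
  calc N₁ ^ 2 ≤ N₁ ^ 2 * (k * M.ratio a N₁ Na) := le_mul_of_one_le_right (sq_nonneg N₁) hr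
    _ = k * (N₁ ^ 2 * M.ratio a N₁ Na) := mul_left_comm _ _ _
    _ ≤ k * (w / v * Na ^ 2) :=
      mul_le_mul_of_nonneg_left (sq_mul_ratio_le hV hv ha h₁ hNa) (zero_le_one.trans hk)
    _ = k * (w / v) * Na ^ 2 := (mul_assoc _ _ _).symm

lemma inv_d_le (hV : MapsTo M.variance (Icc (M.μ a) (M.μ 0)) (Icc v w)) (hv : 0 < v)
    (hvw : v ≤ w) (ha : a ≠ 0) (h₁ : 0 < N₁) (hNa : 0 < Na) (hr : M.ratio a N₁ Na ≤ 1) {δ : ℝ}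
    (hδ : 0 < δ) (hgap : δ ≤ M.μ 0 - M.μ a) :
    (M.d (M.μ a) (M.x1 a N₁ Na))⁻¹ ≤ 2 * w * (1 + w / v) ^ 2 / δ ^ 2 := by
  set x := M.x1 a N₁ Na with hx
  have hw : 0 < w := hv.trans_le hvw
  have hxI := x1_mem_Ioo (M := M) ha h₁ hNa
  have hda : 0 < M.d (M.μ a) x := d_μ_x1_pos ha h₁ hNa
  have hδx : δ ≤ (1 + w / v) * (x - M.μ a) := by
    have hN : N₁ + Na ≤ (1 + w / v) * N₁ := by
      linarith [le_mul_of_ratio_le_one hV hv hvw ha h₁ hNa hr]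
    calc δ ≤ M.μ 0 - M.μ a := hgap
      _ = (N₁ + Na) * ((M.μ 0 - M.μ a) / (N₁ + Na)) := by field_simp
      _ ≤ (1 + w / v) * N₁ * ((M.μ 0 - M.μ a) / (N₁ + Na)) := by
        gcongr
        exact div_nonneg (hδ.le.trans hgap) (by positivity)
      _ = (1 + w / v) * (x - M.μ a) := by rw [hx, x1_sub_μ (by positivity), mul_assoc]
  have hsq : (x - M.μ a) ^ 2 ≤ 2 * w * M.d (M.μ a) x :=
    sq_sub_le_two_mul_mul_d (M.μ_mem a) (x1_mem_S ha h₁ hNa) fun y hy =>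
      (hV (ordConnected_Icc.uIcc_subset (left_mem_Icc.2 (M.μ_best a ha).le)
        (Ioo_subset_Icc_self hxI) hy)).2
  rw [inv_le_iff_one_le_mul₀ hda, div_mul_eq_mul_div, one_le_div (by positivity)]
  calc δ ^ 2 ≤ ((1 + w / v) * (x - M.μ a)) ^ 2 := by gcongr
    _ = (1 + w / v) ^ 2 * (x - M.μ a) ^ 2 := mul_pow _ _ 2
    _ ≤ (1 + w / v) ^ 2 * (2 * w * M.d (M.μ a) x) := by gcongr
    _ = 2 * w * (1 + w / v) ^ 2 * M.d (M.μ a) x := by ring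

lemma sq_sub_x1_div_mem_Icc (hV : MapsTo M.variance (Icc (M.μ a) (M.μ 0)) (Icc v w)) (hv : 0 < v)
    (ha : a ≠ 0) (h₁ : 0 < N₁) (hNa : 0 < Na) :
    (M.x1 a N₁ Na - M.μ a) ^ 2 /
        (M.variance (M.x1 a N₁ Na) * M.d (M.μ a) (M.x1 a N₁ Na)) ∈
      Icc (2 * (v / w)) (2 * (w / v)) :=
  have hx := x1_mem_Ioo (M := M) ha h₁ hNa
  sq_sub_div_variance_mul_d_mem_Icc ordConnected_Icc (M.Icc_μ_subset_S a) hV hv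
    (left_mem_Icc.2 (M.μ_best a ha).le) (Ioo_subset_Icc_self hx) hx.1.ne'

end Arm

section Allocation

variable {N : Fin K → ℝ} {v w : ℝ}

lemma hq_eq (ha : a ≠ 0) (h₀ : 0 < N 0) (hNa : 0 < N a) :
    M.hq a N = (N 0 * M.ratio a (N 0) (N a) + N a) / (N 0 + N a) *
      ((M.x1 a (N 0) (N a) - M.μ a) ^ 2 /
        (M.variance (M.x1 a (N 0) (N a)) * M.d (M.μ a) (M.x1 a (N 0) (N a)))) := by
  have hxS := x1_mem_S (M := M) ha h₀ hNa
  have hV := variance_pos hxS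
  have hd₀ := d_μ_zero_x1_pos (M := M) ha h₀ hNa
  have hda := d_μ_x1_pos (M := M) ha h₀ hNa
  have hN : N 0 + N a ≠ 0 := by positivity
  rw [hq, fq, d2_eq hxS, d2_eq hxS, ← neg_sub (M.μ 0), μ_zero_sub_x1 hN, x1_sub_μ hN, ratio]
  field_simp
  ring

lemma hq_le (hV : MapsTo M.variance (Icc (M.μ a) (M.μ 0)) (Icc v w)) (hv : 0 < v) (hvw : v ≤ w)
    (ha : a ≠ 0) (h₀ : 0 < N 0) (hNa : 0 < N a) (hr : M.ratio a (N 0) (N a) ≤ 1) :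
    M.hq a N ≤ 2 * (w / v) := by
  have hw : 0 < w := hv.trans_le hvw
  have hweight : (N 0 * M.ratio a (N 0) (N a) + N a) / (N 0 + N a) ≤ 1 := by
    rw [div_le_one (by positivity)]
    gcongr
    exact mul_le_of_le_one_right h₀.le hr
  obtain ⟨hlow, hhigh⟩ := sq_sub_x1_div_mem_Icc hV hv ha h₀ hNa
  rw [hq_eq ha h₀ hNa]
  exact (mul_le_of_le_one_left (le_trans (by positivity) hlow) hweight).trans hhigh

lemma le_hq (hV : MapsTo M.variance (Icc (M.μ a) (M.μ 0)) (Icc v w)) (hv : 0 < v) (hvw : v ≤ w)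
    (ha : a ≠ 0) (h₀ : 0 < N 0) (hNa : 0 < N a) (hr : M.ratio a (N 0) (N a) ≤ 1) :
    M.ratio a (N 0) (N a) * (2 * (v / w)) ≤ M.hq a N := by
  have hw : 0 < w := hv.trans_le hvw
  have hr₀ := ratio_pos (M := M) ha h₀ hNa
  have hweight :
      M.ratio a (N 0) (N a) ≤ (N 0 * M.ratio a (N 0) (N a) + N a) / (N 0 + N a) := by
    rw [le_div_iff₀ (by positivity)]
    linarith [mul_le_of_le_one_right hNa.le hr]
  rw [hq_eq ha h₀ hNa]
  gcongr
  exact (sq_sub_x1_div_mem_Icc hV hv ha h₀ hNa).1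

lemma ratio_le_one_of_g_eq_zero (hN : ∀ a, 0 < N a) (hg : M.g N = 0) (ha : a ≠ 0) :
    M.ratio a (N 0) (N a) ≤ 1 :=
  sum_ratio_eq_one_of_g_eq_zero hg ▸ Finset.single_le_sum
    (fun b hb => (ratio_pos (mem_alt.1 hb) (hN 0) (hN b)).le) (mem_alt.2 ha)

lemma exists_max_ratio_of_g_eq_zero (hN : ∀ a, 0 < N a) (hg : M.g N = 0) :
    ∃ k ∈ alt K, (∀ a ∈ alt K, M.ratio a (N 0) (N a) ≤ M.ratio k (N 0) (N k)) ∧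
      1 ≤ K * M.ratio k (N 0) (N k) := by
  obtain ⟨k, hk, hmax⟩ :=
    Finset.exists_max_image (alt K) (fun a => M.ratio a (N 0) (N a)) M.alt_nonempty
  have hrk := ratio_pos (M := M) (mem_alt.1 hk) (hN 0) (hN k)
  refine ⟨k, hk, hmax, ?_⟩
  calc (1 : ℝ) = ∑ a ∈ alt K, M.ratio a (N 0) (N a) := (sum_ratio_eq_one_of_g_eq_zero hg).symm
    _ ≤ (alt K).card * M.ratio k (N 0) (N k) := by
      simpa only [nsmul_eq_mul] using Finset.sum_le_card_nsmul _ _ _ hmax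
    _ ≤ K * M.ratio k (N 0) (N k) := by
      gcongr
      simpa only [Fintype.card_fin] using Finset.card_le_univ (alt K)

lemma sum_le_of_ratio_le_one (hV : ∀ a, MapsTo M.variance (Icc (M.μ a) (M.μ 0)) (Icc v w))
    (hv : 0 < v) (hvw : v ≤ w) (hN : ∀ a, 0 < N a) (hr : ∀ a ≠ 0, M.ratio a (N 0) (N a) ≤ 1) :
    ∑ a, N a ≤ K * (w / v) * N 0 := by
  have hle (a : Fin K) : N a ≤ w / v * N 0 := by
    rcases eq_or_ne a 0 with rfl | ha
    · exact le_mul_of_one_le_left (hN 0).le ((one_le_div hv).2 hvw)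
    · exact le_mul_of_ratio_le_one (hV a) hv hvw ha (hN 0) (hN a) (hr a ha)
  simpa [mul_assoc] using Finset.sum_le_card_nsmul Finset.univ N _ fun a _ => hle a

lemma sum_lt_of_ratio_le_one_of_one_le_mul_ratio
    (hV : ∀ a, MapsTo M.variance (Icc (M.μ a) (M.μ 0)) (Icc v w)) (hv : 0 < v) (hvw : v ≤ w)
    (hN : ∀ a, 0 < N a) (hr : ∀ a ≠ 0, M.ratio a (N 0) (N a) ≤ 1) (ha : a ≠ 0)
    (hra : 1 ≤ K * M.ratio a (N 0) (N a)) : ∑ b, N b < 2 * (K * (w / v)) ^ 2 * N a := by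
  have hw : 0 < w := hv.trans_le hvw
  have hK : (1 : ℝ) ≤ K := by exact_mod_cast NeZero.one_le
  have hNa := hN a
  calc ∑ b, N b ≤ K * (w / v) * N 0 := sum_le_of_ratio_le_one hV hv hvw hN hr
    _ ≤ K * (w / v) * (K * (w / v) * N a) := by
      gcongr
      exact le_mul_of_one_le_mul_ratio (hV a) hv hvw ha (hN 0) hNa hK hra
    _ = (K * (w / v)) ^ 2 * N a := by ring
    _ < 2 * (K * (w / v)) ^ 2 * N a := by
      gcongr
      exact lt_two_mul_self (by positivity)

end Allocation

end Bandit

/-- Lemma on uniform bounds when `g = 0`: uniform upper bounds on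
`h_a` and `d_{a,a}⁻¹`, and a maximal-ratio arm with linearly many samples and `h_ã`
bounded below, with constants depending only on the instance. -/
theorem statement_8 {K : ℕ} [NeZero K] (M : Bandit K) :
    ∃ H D α₀ β₀ : ℝ, 0 < H ∧ 0 < D ∧ 0 < α₀ ∧ 0 < β₀ ∧
      ∀ Nv : Fin K → ℝ, (∀ a, 0 < Nv a) → M.g Nv = 0 →
        (∀ a ∈ alt K,
          M.hq a Nv ≤ H ∧ (M.d (M.μ a) (M.x1 a (Nv 0) (Nv a)))⁻¹ ≤ D) ∧
        ∃ atil ∈ alt K,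
          (∀ a ∈ alt K,
            M.d (M.μ 0) (M.x1 a (Nv 0) (Nv a)) / M.d (M.μ a) (M.x1 a (Nv 0) (Nv a)) ≤
              M.d (M.μ 0) (M.x1 atil (Nv 0) (Nv atil)) /
                M.d (M.μ atil) (M.x1 atil (Nv 0) (Nv atil))) ∧
          α₀ * (∑ a, Nv a) < Nv atil ∧
          β₀ ≤ M.hq atil Nv := by
  obtain ⟨v, w, hv, hvw, hV⟩ := M.exists_forall_mapsTo_variance_Icc
  obtain ⟨δ, hδ, hgap⟩ := M.exists_gap_pos
  have hw : 0 < w := hv.trans_le hvw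
  have hK : (0 : ℝ) < K := Nat.cast_pos.2 (NeZero.pos K)
  refine ⟨2 * (w / v), 2 * w * (1 + w / v) ^ 2 / δ ^ 2, (2 * (K * (w / v)) ^ 2)⁻¹,
    (K : ℝ)⁻¹ * (2 * (v / w)), by positivity, by positivity, by positivity, by positivity,
    fun N hN hg => ?_⟩
  have hr (a : Fin K) (ha : a ≠ 0) : M.ratio a (N 0) (N a) ≤ 1 :=
    ratio_le_one_of_g_eq_zero hN hg ha
  refine ⟨fun a hmem => ?_, ?_⟩
  · have ha := mem_alt.1 hmem
    exact ⟨hq_le (hV a) hv hvw ha (hN 0) (hN a) (hr a ha),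
      inv_d_le (hV a) hv hvw ha (hN 0) (hN a) (hr a ha) hδ (hgap a ha)⟩
  · obtain ⟨k, hmem, hmax, hrk⟩ := exists_max_ratio_of_g_eq_zero hN hg
    have hk := mem_alt.1 hmem
    refine ⟨k, hmem, hmax, ?_, ?_⟩
    · rw [inv_mul_lt_iff₀ (by positivity)]
      exact sum_lt_of_ratio_le_one_of_one_le_mul_ratio hV hv hvw hN hr hk hrk
    · refine le_trans ?_ (le_hq (hV k) hv hvw hk (hN 0) (hN k) (hr k hk))
      gcongr
      exact (inv_le_iff_one_le_mul₀' hK).2 hrk
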